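/- Let d ≥ 3, i ≥ 2 and l ≥ 1 be natural numbers with i + l ≤ d. The assignment τ_R(1) = i−1; τ_R(1+j) = j for 1 ≤ j ≤ i−2; τ_R(i−1+j) = i+l−2+j for 1 ≤ j ≤ d−i−l; and τ_R(d−l−1+j) = i−1+j for 1 ≤ j ≤ l−1, defines a permutation of the set {1, 2, …, d−2}, and the sign of this permutation equals (−1)^{(d−i)·l + d}. -/

import Mathlib

/-!
`τ_R` preserves the two blocks `{1, …, i-1}` and `{i, …, d-2}`. On the first it exchanges the
singleton `{1}` with the `i-2` elements after it, on the second it exchanges `d-i-l` consecutive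
elements with the `l-1` elements after them. Exchanging adjacent intervals of lengths `m` and `n`
creates exactly `m * n` inversions, so the sign is `(-1) ^ ((i-2) + (d-i-l) * (l-1))`, and the
exponent has the parity of `(d-i) * l + d`.
-/

open Equiv

/-- The permutation of `Fin (m + n)` exchanging its first `m` elements with its last `n` elements,
preserving the order inside each of the two intervals. -/
def blockSwap (m n : ℕ) : Perm (Fin (m + n)) :=
  finAddFlip.trans (finCongr (Nat.add_comm n m))

section blockSwap

variable {m n : ℕ}

theorem val_blockSwap_castAdd (k : Fin m) : (blockSwap m n (Fin.castAdd n k) : ℕ) = k + n := by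
  simp [blockSwap, add_comm]

theorem val_blockSwap_natAdd (k : Fin n) : (blockSwap m n (Fin.natAdd m k) : ℕ) = k := by
  simp [blockSwap]

theorem val_blockSwap (x : Fin (m + n)) :
    (blockSwap m n x : ℕ) = if (x : ℕ) < m then x + n else x - m := by
  cases x using Fin.addCases with
  | left k => simp [val_blockSwap_castAdd]
  | right k => simp [val_blockSwap_natAdd]

variable (m n) in
theorem sign_blockSwap : Perm.sign (blockSwap m n) = (-1) ^ (m * n) := by
  have inversions_left (j : Fin m) :
      ∏ i ∈ Finset.Iio (Fin.castAdd n j),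
        (if blockSwap m n i < blockSwap m n (Fin.castAdd n j) then 1 else -1 : ℤˣ) = 1 := by
    refine Finset.prod_eq_one fun i hi => if_pos ?_
    simp only [Finset.mem_Iio, Fin.lt_def, val_blockSwap, Fin.val_castAdd] at hi ⊢
    grind
  have inversions_right (j : Fin n) :
      ∏ i ∈ Finset.Iio (Fin.natAdd m j),
        (if blockSwap m n i < blockSwap m n (Fin.natAdd m j) then 1 else -1 : ℤˣ) = (-1) ^ m := by
    rw [← Finset.filter_gt_eq_Iio, Finset.prod_filter, Fin.prod_univ_add]
    have left_inverted (i : Fin m) :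
        blockSwap m n (Fin.natAdd m j) < blockSwap m n (Fin.castAdd n i) := by
      rw [Fin.lt_def, val_blockSwap_castAdd, val_blockSwap_natAdd]
      omega
    have right_monotone (i : Fin n) (hij : i < j) :
        blockSwap m n (Fin.natAdd m i) < blockSwap m n (Fin.natAdd m j) := by
      rwa [Fin.lt_def, val_blockSwap_natAdd, val_blockSwap_natAdd]
    have left_lt (i : Fin m) : Fin.castAdd n i < Fin.natAdd m j := by
      rw [Fin.lt_def, Fin.val_castAdd, Fin.val_natAdd]
      omega
    simp +contextual [left_lt, (left_inverted _).not_gt, right_monotone]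
  rw [Perm.sign_eq_prod_prod_Iio, Fin.prod_univ_add]
  simp only [inversions_left, inversions_right, Finset.prod_const, Finset.card_univ,
    Fintype.card_fin, one_pow, one_mul, ← pow_mul]

end blockSwap

/-- The block sum of `σ` and `τ`: the permutation of `Fin (m + n)` acting as `σ` on the first `m`
elements and as `τ` on the last `n` elements. -/
def blockSum {m n : ℕ} (σ : Perm (Fin m)) (τ : Perm (Fin n)) : Perm (Fin (m + n)) :=
  finSumFinEquiv.permCongr (Perm.sumCongr σ τ)

section blockSum

variable {m n : ℕ} (σ : Perm (Fin m)) (τ : Perm (Fin n))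

theorem blockSum_castAdd (k : Fin m) : blockSum σ τ (Fin.castAdd n k) = Fin.castAdd n (σ k) := by
  simp [blockSum, permCongr_apply]

theorem blockSum_natAdd (k : Fin n) : blockSum σ τ (Fin.natAdd m k) = Fin.natAdd m (τ k) := by
  simp [blockSum, permCongr_apply]

theorem sign_blockSum : Perm.sign (blockSum σ τ) = Perm.sign σ * Perm.sign τ := by
  rw [blockSum, Perm.sign_permCongr, Perm.sign_sumCongr]

end blockSum

/-- The permutation `τ_R` for `i = a + 2`, `l = c + 1` and `d = i + l + b`, so that the
intervals following `1` on which it is a translation have lengths `a`, `b` and `c`, and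
`d - 2 = 1 + a + (b + c)`. The element `k` of `{1, …, d-2}` is encoded as `k - 1`. -/
def tauRight (a b c : ℕ) : Perm (Fin (1 + a + (b + c))) :=
  blockSum (blockSwap 1 a) (blockSwap b c)

theorem val_tauRight {a b c : ℕ} (x : Fin (1 + a + (b + c))) :
    (tauRight a b c x : ℕ) =
      if (x : ℕ) = 0 then a
      else if (x : ℕ) < 1 + a then x - 1
      else if (x : ℕ) < 1 + a + b then x + c
      else x - b := by
  cases x using Fin.addCases with
  | left k =>
    simp only [tauRight, blockSum_castAdd, Fin.val_castAdd, val_blockSwap]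
    grind
  | right k =>
    simp only [tauRight, blockSum_natAdd, Fin.val_natAdd, val_blockSwap]
    grind

theorem sign_tauRight (a b c : ℕ) : Perm.sign (tauRight a b c) = (-1) ^ (a + b * c) := by
  rw [tauRight, sign_blockSum, sign_blockSwap, sign_blockSwap, one_mul, pow_add]

/-- Let `d ≥ 3`, `i ≥ 2`, `l ≥ 1` with `i + l ≤ d`.  The assignment (in 1-based
indexing of `{1, …, d-2}`, an element `x : Fin (d-2)` representing the number
`(x : ℕ) + 1`):
`τ_R(1) = i-1`; `τ_R(1+j) = j` for `1 ≤ j ≤ i-2`; `τ_R(i-1+j) = i+l-2+j` for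
`1 ≤ j ≤ d-i-l`; and `τ_R(d-l-1+j) = i-1+j` for `1 ≤ j ≤ l-1`,
defines a permutation of `{1, …, d-2}`, whose sign equals `(-1)^{(d-i)·l + d}`.
(This is the order-preserving bijection `τ_e` for a right-handed internal edge `e`
of type `(i,l)` of a `d`-leafed binary ribbon tree.) -/
theorem sign_tau_right (d i l : ℕ) (hd : 3 ≤ d) (hi : 2 ≤ i) (hl : 1 ≤ l)
    (hil : i + l ≤ d) :
    ∃ τ : Equiv.Perm (Fin (d - 2)),
      (∀ x : Fin (d - 2), (x : ℕ) + 1 = 1 → ((τ x : ℕ) + 1 = i - 1)) ∧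
      (∀ x : Fin (d - 2), ∀ j : ℕ, 1 ≤ j → j ≤ i - 2 →
        (x : ℕ) + 1 = 1 + j → (τ x : ℕ) + 1 = j) ∧
      (∀ x : Fin (d - 2), ∀ j : ℕ, 1 ≤ j → j ≤ d - i - l →
        (x : ℕ) + 1 = i - 1 + j → (τ x : ℕ) + 1 = i + l - 2 + j) ∧
      (∀ x : Fin (d - 2), ∀ j : ℕ, 1 ≤ j → j ≤ l - 1 →
        (x : ℕ) + 1 = d - l - 1 + j → (τ x : ℕ) + 1 = i - 1 + j) ∧
      Equiv.Perm.sign τ = (-1) ^ ((d - i) * l + d) := by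
  obtain ⟨a, b, c, rfl, rfl, hd_eq, hn⟩ : ∃ a b c,
      i = a + 2 ∧ l = c + 1 ∧ d = a + b + c + 3 ∧ d - 2 = 1 + a + (b + c) :=
    ⟨i - 2, d - i - l, l - 1, by omega, by omega, by omega, by omega⟩
  rw [hn]
  refine ⟨tauRight a b c, by grind [val_tauRight], by grind [val_tauRight],
    by grind [val_tauRight], by grind [val_tauRight], ?_⟩
  have exponent_eq :
      (d - (a + 2)) * (c + 1) + d = a + b * c + (c * (c + 1) + 2 * (b + c + 2)) := by
    rw [show d - (a + 2) = b + c + 1 by omega, hd_eq]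
    ring
  have even_rest : Even (c * (c + 1) + 2 * (b + c + 2)) :=
    (Nat.even_mul_succ_self c).add (even_two_mul _)
  rw [sign_tauRight, exponent_eq, pow_add _ (a + b * c), even_rest.neg_one_pow, mul_one]
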